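/- For every n ≥ 3, if F is a family of C(2n−4, n−2) + 1 pairwise disjoint nonempty compact convex subsets of ℝ² in general position that admits a common transversal line, then F contains a subfamily of n sets in convex position (C(a, b) is the binomial coefficient). -/

import Mathlib

open Set

noncomputable section

/-- The Euclidean plane. -/
abbrev Plane : Type := EuclideanSpace ℝ (Fin 2)

/-- The 2×2 determinant of two plane vectors. -/
def det2 (u v : Plane) : ℝ := u 0 * v 1 - u 1 * v 0

/-- A convex body in the plane: nonempty, compact and convex. -/
def ConvexBody2 (A : Set Plane) : Prop := A.Nonempty ∧ IsCompact A ∧ Convex ℝ A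

/-- A family of sets is in convex position if removing any member changes the
convex hull of the union of the family. -/
def ConvexPos (F : Set (Set Plane)) : Prop :=
  ∀ A ∈ F, convexHull ℝ (⋃₀ F) ≠ convexHull ℝ (⋃₀ (F \ {A}))

/-- A family is in general position if every 3-element subfamily is in convex position. -/
def GenPos (F : Set (Set Plane)) : Prop :=
  ∀ G ⊆ F, G.ncard = 3 → ConvexPos G

/-- Two sets are noncrossing if both set differences are connected. -/
def NoncrossingPair (A B : Set Plane) : Prop := IsConnected (A \ B) ∧ IsConnected (B \ A)

/-- Two convex bodies are tangent if they intersect but their interiors are disjoint. -/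
def TangentBodies (A B : Set Plane) : Prop :=
  (A ∩ B).Nonempty ∧ interior A ∩ interior B = ∅

/-- The line `{x | f x = c}` (for `f ≠ 0`) is tangent to `A`:
it meets `A` and `A` lies in one of the two closed half-planes it bounds. -/
def TangentLineTo (f : Plane →ₗ[ℝ] ℝ) (c : ℝ) (A : Set Plane) : Prop :=
  (∃ x ∈ A, f x = c) ∧ ((∀ x ∈ A, f x ≤ c) ∨ (∀ x ∈ A, c ≤ f x))

/-- No line is tangent to three distinct members of the family. -/
def NoTripleTangentLine (F : Set (Set Plane)) : Prop :=
  ∀ f : Plane →ₗ[ℝ] ℝ, f ≠ 0 → ∀ c : ℝ, ∀ A ∈ F, ∀ B ∈ F, ∀ C ∈ F,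
    A ≠ B → B ≠ C → A ≠ C →
    ¬ (TangentLineTo f c A ∧ TangentLineTo f c B ∧ TangentLineTo f c C)

/-- The ordered triple `(A₁, A₂, A₃)` is counterclockwise oriented. -/
def CCWOriented (A₁ A₂ A₃ : Set Plane) : Prop :=
  ∃ a₁ ∈ A₁ ∩ frontier (convexHull ℝ (A₁ ∪ A₂ ∪ A₃)),
  ∃ a₂ ∈ A₂ ∩ frontier (convexHull ℝ (A₁ ∪ A₂ ∪ A₃)),
  ∃ a₃ ∈ A₃ ∩ frontier (convexHull ℝ (A₁ ∪ A₂ ∪ A₃)),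
    0 < det2 (a₂ - a₁) (a₃ - a₁)

/-- The ordered triple `(A₁, A₂, A₃)` is clockwise oriented. -/
def CWOriented (A₁ A₂ A₃ : Set Plane) : Prop :=
  ∃ a₁ ∈ A₁ ∩ frontier (convexHull ℝ (A₁ ∪ A₂ ∪ A₃)),
  ∃ a₂ ∈ A₂ ∩ frontier (convexHull ℝ (A₁ ∪ A₂ ∪ A₃)),
  ∃ a₃ ∈ A₃ ∩ frontier (convexHull ℝ (A₁ ∪ A₂ ∪ A₃)),
    det2 (a₂ - a₁) (a₃ - a₁) < 0

/-- An affine line in the plane: an affine subspace with 1-dimensional direction. -/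
def IsLine (L : AffineSubspace ℝ Plane) : Prop := Module.finrank ℝ L.direction = 1

/-- `L` is a transversal line of the family `F`. -/
def TransversalLine (L : AffineSubspace ℝ Plane) (F : Set (Set Plane)) : Prop :=
  IsLine L ∧ ∀ A ∈ F, ((L : Set Plane) ∩ A).Nonempty

/-!
The support functions `h_A(θ) = max_{z ∈ A} ⟪(cos θ, sin θ), z⟫` of two disjoint bodies agree in
exactly two directions, those of the two common supporting lines that have both bodies on one side.
Take the transversal as horizontal axis and order the bodies along it. For `i < j` a line separates
the two bodies with a normal of angle `u i j ∈ (-π/2, π/2)`, and the two directions of agreement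
lift to angles `s i j < u i j < t i j` at distance less than `π` from `u i j`: body `j` reaches
further than `i` in the directions `(s i j, t i j)` and less far in `(t i j, s i j + 2π)`.

General position makes every triple `i < j < k` a cap, `t j k < t i j`, or a cup, `s i j < s j k`.
By the cups-caps theorem of Erdős and Szekeres there is a sequence of `n` bodies all of whose
consecutive triples are caps, or, after reflection in the transversal, cups. As `t i k` lies between
`t j k` and `t i j` for every cap, all triples of the sequence are caps. The arcs of directions in
which a fixed member reaches further than each of the others then overlap pairwise, as intervals of
the line rather than only of the circle, so they have a common direction.
-/

section Paths

variable {ι : Type*} [LinearOrder ι]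

/-- The first `m` values of `f` form a monotone path for the ternary relation `P`: an increasing
sequence in `S` whose consecutive triples satisfy `P`. The values `f i` for `i ≥ m` are junk. -/
structure IsTriplePath (P : ι → ι → ι → Prop) (S : Finset ι) (m : ℕ) (f : ℕ → ι) : Prop where
  mem : ∀ i < m, f i ∈ S
  lt_succ : ∀ i, i + 1 < m → f i < f (i + 1)
  rel : ∀ i, i + 2 < m → P (f i) (f (i + 1)) (f (i + 2))

namespace IsTriplePath

variable {P : ι → ι → ι → Prop} {S T : Finset ι} {m : ℕ} {f : ℕ → ι}

theorem mono (hf : IsTriplePath P S m f) (hST : S ⊆ T) : IsTriplePath P T m f :=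
  ⟨fun i hi => hST (hf.mem i hi), hf.lt_succ, hf.rel⟩

theorem lt (hf : IsTriplePath P S m f) {i j : ℕ} (hij : i < j) (hj : j < m) : f i < f j := by
  induction j, hij using Nat.le_induction with
  | base => exact hf.lt_succ i hj
  | succ j _ ih => exact (ih (by lia)).trans (hf.lt_succ j hj)

theorem strictMonoOn (hf : IsTriplePath P S m f) : StrictMonoOn f (Iio m) :=
  fun _ _ _ hj hij => hf.lt hij hj

theorem exists_of_one_lt_card (P : ι → ι → ι → Prop) (hS : 1 < S.card) :
    ∃ f, IsTriplePath P S 2 f := by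
  obtain ⟨a, ha, b, hb, hab⟩ := Finset.one_lt_card.mp hS
  wlog hlt : a < b generalizing a b
  · exact this b hb a ha hab.symm (lt_of_le_of_ne (not_lt.mp hlt) hab.symm)
  refine ⟨fun i => if i = 0 then a else b, fun i _ => ?_, fun i hi => ?_, fun i hi => by lia⟩
  · split_ifs <;> assumption
  · obtain rfl : i = 0 := by lia
    simpa using hlt

theorem snoc (hf : IsTriplePath P S (m + 2) f) {c : ι} (hc : c ∈ S) (hlt : f (m + 1) < c)
    (hP : P (f m) (f (m + 1)) c) :
    IsTriplePath P S (m + 3) (Function.update f (m + 2) c) := by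
  refine ⟨fun i hi => ?_, fun i hi => ?_, fun i hi => ?_⟩
  · rcases eq_or_ne i (m + 2) with rfl | hne
    · simpa using hc
    · simpa [hne] using hf.mem i (by lia)
  · rcases eq_or_ne i (m + 1) with rfl | hne
    · simpa using hlt
    · simpa [hne, show i ≠ m + 2 by lia] using hf.lt_succ i (by lia)
  · rcases eq_or_ne i m with rfl | hne
    · simpa using hP
    · simpa [hne, show i ≠ m + 1 by lia, show i ≠ m + 2 by lia] using hf.rel i (by lia)

theorem cons (hf : IsTriplePath P S (m + 2) f) {c : ι} (hc : c ∈ S) (hlt : c < f 0)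
    (hP : P c (f 0) (f 1)) :
    IsTriplePath P S (m + 3) (fun i => i.casesOn c f) := by
  refine ⟨?_, ?_, ?_⟩ <;> rintro (_ | i) hi
  · exact hc
  · exact hf.mem i (by lia)
  · exact hlt
  · exact hf.lt_succ i (by lia)
  · exact hP
  · exact hf.rel i (by lia)

/-- The cups-caps theorem of Erdős and Szekeres, for two arbitrary ternary relations. -/
theorem exists_or_exists_of_choose_lt_card {P Q : ι → ι → ι → Prop}
    (hPQ : ∀ i j k, i < j → j < k → P i j k ∨ Q i j k) (a b : ℕ) (S : Finset ι)
    (hS : (a + b).choose a < S.card) :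
    (∃ f, IsTriplePath P S (a + 2) f) ∨ ∃ f, IsTriplePath Q S (b + 2) f := by
  classical
  induction a generalizing b S with
  | zero => exact .inl (exists_of_one_lt_card P (by simpa using hS))
  | succ a iha =>
  induction b generalizing S with
  | zero => exact .inr (exists_of_one_lt_card Q (by simpa using hS))
  | succ b ihb =>
    let IsLast (y : ι) : Prop := ∃ f, IsTriplePath P S (a + 2) f ∧ f (a + 1) = y
    have hcard := Finset.card_filter_add_card_filter_not (s := S) IsLast
    have hchoose : (a + 1 + (b + 1)).choose (a + 1) =
        (a + (b + 1)).choose a + (a + 1 + b).choose (a + 1) := by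
      rw [show a + 1 + (b + 1) = a + (b + 1) + 1 by ring, Nat.choose_succ_succ',
        show a + 1 + b = a + (b + 1) by ring]
    rcases lt_or_ge ((a + (b + 1)).choose a) (S.filter (¬ IsLast ·)).card with hlarge | hsmall
    · rcases iha (b + 1) _ hlarge with ⟨f, hf⟩ | ⟨f, hf⟩
      · have hlast := (Finset.mem_filter.mp (hf.mem (a + 1) (by lia))).2
        exact absurd ⟨f, hf.mono (Finset.filter_subset _ _), rfl⟩ hlast
      · exact .inr ⟨f, hf.mono (Finset.filter_subset _ _)⟩
    · rcases ihb (S.filter IsLast) (by lia) with ⟨f, hf⟩ | ⟨g, hg⟩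
      · exact .inl ⟨f, hf.mono (Finset.filter_subset _ _)⟩
      · -- A `P`-path ending where the `Q`-path `g` starts extends one of the two paths.
        obtain ⟨f, hf, hfg⟩ := (Finset.mem_filter.mp (hg.mem 0 (by lia))).2
        replace hg := hg.mono (Finset.filter_subset _ S)
        have hfa : f a < g 0 := hfg ▸ hf.lt_succ a (by lia)
        have hg01 : g 0 < g 1 := hg.lt_succ 0 (by lia)
        rcases hPQ (f a) (g 0) (g 1) hfa hg01 with hP | hQ
        · exact .inl ⟨_, hf.snoc (hg.mem 1 (by lia)) (hfg ▸ hg01) (hfg ▸ hP)⟩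
        · exact .inr ⟨_, hg.cons (hf.mem a (by lia)) hfa hQ⟩

/-- The values `T i j` play the role of the slopes of the chords of a planar point set. -/
theorem lt_of_between {α : Type*} [LinearOrder α] {T : ι → ι → α}
    (hT : ∀ i j k, i < j → j < k → T j k < T i j → T j k ≤ T i k ∧ T i k ≤ T i j)
    (hf : IsTriplePath (fun i j k => T j k < T i j) S m f) {i j k : ℕ} (hij : i < j) (hjk : j < k)
    (hk : k < m) : T (f j) (f k) < T (f i) (f j) := by
  have next_lt : ∀ {i j : ℕ}, i < j → j + 1 < m → T (f j) (f (j + 1)) < T (f i) (f j) := by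
    intro i j hij
    induction j, hij using Nat.le_induction with
    | base => exact hf.rel i
    | succ j hij ih =>
      intro hj
      exact (hf.rel j hj).trans_le
        (hT _ _ _ (hf.lt hij (by lia)) (hf.lt_succ j (by lia)) (ih (by lia))).1
  have le_next : T (f j) (f k) ≤ T (f j) (f (j + 1)) := by
    induction k, hjk using Nat.le_induction with
    | base => exact le_rfl
    | succ k hjk ih =>
      exact (hT _ _ _ (hf.lt hjk (by lia)) (hf.lt_succ k hk) (next_lt hjk hk)).2.trans
        (ih (by lia))
  exact le_next.trans_lt (next_lt hij (by lia))

end IsTriplePath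

end Paths

section Crossings

open Real

/-- The `2π`-periodic functions `f` and `g` cross exactly twice on the circle: `g` overtakes `f` at
the angle `s` and falls behind at `t`. The angle `u` selects the lifts of the two crossings to the
real line. -/
structure IsCrossing (f g : ℝ → ℝ) (u s t : ℝ) : Prop where
  angle_mem : u ∈ Ioo (-(π / 2)) (π / 2)
  lower_mem : s ∈ Ioo (u - π) u
  upper_mem : t ∈ Ioo u (u + π)
  eq_lower : f s = g s
  eq_upper : f t = g t
  lt_of_mem : ∀ x ∈ Ioo s t, f x < g x
  gt_of_mem : ∀ x ∈ Ioo t (s + 2 * π), g x < f x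

namespace IsCrossing

variable {f g : ℝ → ℝ} {u s t : ℝ}

theorem comp_neg (H : IsCrossing f g u s t) (hf : f.Periodic (2 * π)) (hg : g.Periodic (2 * π)) :
    IsCrossing (fun x => f (-x)) (fun x => g (-x)) (-u) (-t) (-s) := by
  obtain ⟨⟨hu, hu'⟩, ⟨hs, hs'⟩, ⟨ht, ht'⟩, es, et, hlt, hgt⟩ := H
  refine ⟨⟨by linarith, by linarith⟩, ⟨by linarith, by linarith⟩, ⟨by linarith, by linarith⟩,
    by simpa using et, by simpa using es, fun x hx => ?_, fun x hx => ?_⟩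
  · exact hlt (-x) ⟨by linarith [hx.2], by linarith [hx.1]⟩
  · have := hgt (-x + 2 * π) ⟨by linarith [hx.2], by linarith [hx.1]⟩
    rwa [hf, hg] at this

theorem comp_pi_sub (H : IsCrossing f g u s t) (hf : f.Periodic (2 * π))
    (hg : g.Periodic (2 * π)) :
    IsCrossing (fun x => g (π - x)) (fun x => f (π - x)) (-u) (-π - s) (π - t) := by
  obtain ⟨⟨hu, hu'⟩, ⟨hs, hs'⟩, ⟨ht, ht'⟩, es, et, hlt, hgt⟩ := H
  refine ⟨⟨by linarith, by linarith⟩, ⟨by linarith, by linarith⟩, ⟨by linarith, by linarith⟩,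
    ?_, by simpa using et.symm, fun x hx => ?_, fun x hx => ?_⟩
  · rw [show π - (-π - s) = s + 2 * π by ring, hf, hg, es]
  · exact hgt (π - x) ⟨by linarith [hx.2], by linarith [hx.1]⟩
  · exact hlt (π - x) ⟨by linarith [hx.2], by linarith [hx.1]⟩

theorem mem_Ioo_of_lt (H : IsCrossing f g u s t) {x : ℝ} (hx : x ∈ Ico s (s + 2 * π))
    (hlt : f x < g x) : x ∈ Ioo s t := by
  refine ⟨lt_of_le_of_ne hx.1 ?_, lt_of_not_ge fun htx => ?_⟩
  · rintro rfl
    exact hlt.ne H.eq_lower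
  · rcases eq_or_lt_of_le htx with rfl | htx
    · exact hlt.ne H.eq_upper
    · exact hlt.asymm (H.gt_of_mem x ⟨htx, hx.2⟩)

end IsCrossing

/-- The properties of the support functions `h i` of bodies that meet a horizontal line in the order
of `ι`. The parameter `u i j` is the angle of the normal of a line separating the bodies `i` and
`j`; `s i j` and `t i j` are the angles of the outer normals of their lower and upper common
supporting lines. The values at pairs that are not increasing are junk. -/
structure CrossingSystem {ι : Type*} [LinearOrder ι] (h : ι → ℝ → ℝ) (u s t : ι → ι → ℝ) :
    Prop where
  periodic : ∀ i, (h i).Periodic (2 * π)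
  isCrossing : ∀ i j, i < j → IsCrossing (h i) (h j) (u i j) (s i j) (t i j)
  lt_max_right : ∀ i j k, i < j → i < k → ∀ x ∈ Ioo (u i j) (u i k), h i x < max (h j x) (h k x)
  lt_max_left : ∀ i j k, i < k → j < k → ∀ x ∈ Ioo (u i k) (u j k),
    h k (x + π) < max (h i (x + π)) (h j (x + π))
  exists_dominant : ∀ i j k, i ≠ j → i ≠ k → j ≠ k → ∃ x, h j x < h i x ∧ h k x < h i x

namespace CrossingSystem

variable {ι : Type*} [LinearOrder ι] {h : ι → ℝ → ℝ} {u s t : ι → ι → ℝ} {i j k : ι}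

theorem comp_neg (H : CrossingSystem h u s t) :
    CrossingSystem (fun i x => h i (-x)) (fun i j => -u i j) (fun i j => -t i j)
      (fun i j => -s i j) where
  periodic i x := by
    change h i (-(x + 2 * π)) = h i (-x)
    rw [neg_add, ← sub_eq_add_neg, (H.periodic i).sub_eq]
  isCrossing i j hij := (H.isCrossing i j hij).comp_neg (H.periodic i) (H.periodic j)
  lt_max_right i j k hij hik x hx := by
    rw [max_comm]
    exact H.lt_max_right i k j hik hij (-x) ⟨by linarith [hx.2], by linarith [hx.1]⟩
  lt_max_left i j k hik hjk x hx := by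
    have hper (l : ι) : h l (-(x + π)) = h l (-x + π) := by
      rw [← H.periodic l (-(x + π))]
      ring_nf
    rw [hper, hper, hper, max_comm]
    exact H.lt_max_left j i k hjk hik (-x) ⟨by linarith [hx.2], by linarith [hx.1]⟩
  exists_dominant i j k hij hik hjk := by
    obtain ⟨x, hx⟩ := H.exists_dominant i j k hij hik hjk
    exact ⟨-x, by simpa using hx⟩

/-- Reflection in a vertical line, which reverses the order of the bodies. -/
theorem dual (H : CrossingSystem h u s t) :
    CrossingSystem (ι := ιᵒᵈ) (fun i x => h i.ofDual (π - x)) (fun i j => -u j.ofDual i.ofDual)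
      (fun i j => -π - s j.ofDual i.ofDual) (fun i j => π - t j.ofDual i.ofDual) where
  periodic i x := by
    change h i.ofDual (π - (x + 2 * π)) = h i.ofDual (π - x)
    rw [← sub_sub, (H.periodic _).sub_eq]
  isCrossing i j hij := (H.isCrossing _ _ hij).comp_pi_sub (H.periodic _) (H.periodic _)
  lt_max_right i j k hij hik x hx := by
    rw [max_comm, show π - x = -x + π by ring]
    exact H.lt_max_left _ _ _ hik hij (-x) ⟨lt_neg.mp hx.2, neg_lt.mp hx.1⟩
  lt_max_left i j k hik hjk x hx := by
    rw [max_comm, show π - (x + π) = -x by ring]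
    exact H.lt_max_right _ _ _ hjk hik (-x) ⟨lt_neg.mp hx.2, neg_lt.mp hx.1⟩
  exists_dominant i j k hij hik hjk := by
    obtain ⟨x, hx⟩ := H.exists_dominant i.ofDual j.ofDual k.ofDual hij hik hjk
    exact ⟨π - x, by simpa using hx⟩

theorem exists_mem_Ioo_lt (H : CrossingSystem h u s t) (hij : i < j) (hki : k ≠ i) (hkj : k ≠ j) :
    ∃ x ∈ Ioo (s i j) (t i j), h k x < h j x := by
  obtain ⟨x, hi, hk⟩ := H.exists_dominant j i k hij.ne' hkj.symm hki.symm
  obtain ⟨m, hm, -⟩ := existsUnique_add_zsmul_mem_Ico two_pi_pos x (s i j)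
  have hper (l : ι) : h l (x + m • (2 * π)) = h l x := (H.periodic l).zsmul m x
  exact ⟨_, (H.isCrossing i j hij).mem_Ioo_of_lt hm (by rwa [hper, hper]), by rwa [hper, hper]⟩

theorem upper_lt_or_lower_lt (H : CrossingSystem h u s t) (hij : i < j) (hjk : j < k) :
    t j k < t i j ∨ s i j < s j k := by
  by_contra! hcon
  obtain ⟨x, hx, hlt⟩ := H.exists_mem_Ioo_lt hij (hij.trans hjk).ne' hjk.ne'
  exact hlt.asymm ((H.isCrossing j k hjk).lt_of_mem x
    ⟨hcon.2.trans_lt hx.1, hx.2.trans_le hcon.1⟩)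

theorem lower_lt_upper (H : CrossingSystem h u s t) (hik : i < k) (hjk : j < k) :
    s i k < t j k := by
  have Hik := H.isCrossing i k hik
  have Hjk := H.isCrossing j k hjk
  rcases eq_or_ne i j with rfl | hij
  · exact Hik.lower_mem.2.trans Hik.upper_mem.1
  by_contra! hcon
  obtain ⟨x, hx, hlt⟩ := H.exists_mem_Ioo_lt hik hij.symm hjk.ne
  have htx : t j k < x := hcon.trans_lt hx.1
  have hsx : s j k + 2 * π ≤ x :=
    not_lt.mp fun hxs => hlt.asymm (Hjk.gt_of_mem x ⟨htx, hxs⟩)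
  have hmax := H.lt_max_left j i k hjk hik (x - π)
    ⟨by linarith [Hjk.lower_mem.1], by linarith [Hik.upper_mem.2, hx.2]⟩
  rw [sub_add_cancel] at hmax
  exact hmax.not_gt (max_lt hlt (Hik.lt_of_mem x hx))

theorem upper_lt_lower_add_two_pi (H : CrossingSystem h u s t) (hij : i < j) (hik : i < k) :
    t i j < s i k + 2 * π := by
  have := H.dual.lower_lt_upper (OrderDual.toDual_lt_toDual.mpr hik)
    (OrderDual.toDual_lt_toDual.mpr hij)
  simp only [OrderDual.ofDual_toDual] at this
  linarith

theorem upper_le_upper_right (H : CrossingSystem h u s t) (hij : i < j) (hjk : j < k)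
    (hcap : t j k < t i j) : t j k ≤ t i k := by
  have hik := hij.trans hjk
  have Hij := H.isCrossing i j hij
  have Hik := H.isCrossing i k hik
  by_contra! hlt
  have hjlt : h j (t i k) < h i (t i k) := Hik.eq_upper ▸
    (H.isCrossing j k hjk).lt_of_mem _ ⟨H.lower_lt_upper hjk hik, hlt⟩
  have hle : t i k ≤ s i j :=
    not_lt.mp fun hs => hjlt.asymm (Hij.lt_of_mem _ ⟨hs, hlt.trans hcap⟩)
  have hmax := H.lt_max_right i k j hik hij (t i k)
    ⟨Hik.upper_mem.1, hle.trans_lt Hij.lower_mem.2⟩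
  exact hmax.not_ge (max_le Hik.eq_upper.ge hjlt.le)

theorem upper_le_upper_left (H : CrossingSystem h u s t) (hij : i < j) (hjk : j < k)
    (hcap : t j k < t i j) : t i k ≤ t i j := by
  have := H.dual.upper_le_upper_right (OrderDual.toDual_lt_toDual.mpr hjk)
    (OrderDual.toDual_lt_toDual.mpr hij) (sub_lt_sub_left hcap π)
  exact (sub_le_sub_iff_left π).mp this

theorem exists_forall_lt_of_caps (H : CrossingSystem h u s t) {S : Finset ι}
    (hcap : ∀ i ∈ S, ∀ j ∈ S, ∀ k ∈ S, i < j → j < k → t j k < t i j) (hj : j ∈ S) :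
    ∃ x, ∀ i ∈ S, i ≠ j → h i x < h j x := by
  -- `j` reaches further than `i` in the directions between `arcStart i` and `arcEnd i`.
  let arcStart (i : ι) : ℝ := if i < j then s i j else t j i
  let arcEnd (i : ι) : ℝ := if i < j then t i j else s j i + 2 * π
  have arcStart_lt_arcEnd : ∀ i ∈ S.erase j, ∀ k ∈ S.erase j, arcStart i < arcEnd k := by
    intro i hi k hk
    obtain ⟨hij, hi⟩ := Finset.mem_erase.mp hi
    obtain ⟨hkj, hk⟩ := Finset.mem_erase.mp hk
    rcases hij.lt_or_gt with hij | hij <;> rcases hkj.lt_or_gt with hkj | hkj <;>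
      simp only [arcStart, arcEnd, hij, hkj, hij.not_gt, hkj.not_gt, if_true, if_false]
    · exact H.lower_lt_upper hij hkj
    · have Hij := H.isCrossing i j hij
      have Hjk := H.isCrossing j k hkj
      linarith [Hij.angle_mem.2, Hij.lower_mem.2, Hjk.angle_mem.1, Hjk.lower_mem.1]
    · exact hcap k hk j hj i hi hkj hij
    · exact H.upper_lt_lower_add_two_pi hij hkj
  obtain ⟨x, hstart, hend⟩ := Order.exists_between_finsets ((S.erase j).image arcStart)
    ((S.erase j).image arcEnd) (by simpa only [Finset.forall_mem_image] using arcStart_lt_arcEnd)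
  simp only [Finset.forall_mem_image] at hstart hend
  refine ⟨x, fun i hi hij => ?_⟩
  have hmem := Finset.mem_erase.mpr ⟨hij, hi⟩
  have hx : x ∈ Ioo (arcStart i) (arcEnd i) := ⟨hstart hmem, hend hmem⟩
  rcases hij.lt_or_gt with hij | hji
  · exact (H.isCrossing i j hij).lt_of_mem x (by simpa [arcStart, arcEnd, hij] using hx)
  · exact (H.isCrossing j i hji).gt_of_mem x (by simpa [arcStart, arcEnd, hji.not_gt] using hx)

theorem exists_finset_of_path (H : CrossingSystem h u s t) {S : Finset ι} {m : ℕ} {f : ℕ → ι}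
    (hf : IsTriplePath (fun i j k => t j k < t i j) S m f) :
    ∃ R : Finset ι, R.card = m ∧ ∀ j ∈ R, ∃ x, ∀ i ∈ R, i ≠ j → h i x < h j x := by
  have hT (i j k : ι) (hij : i < j) (hjk : j < k) (hcap : t j k < t i j) :=
    And.intro (H.upper_le_upper_right hij hjk hcap) (H.upper_le_upper_left hij hjk hcap)
  refine ⟨(Finset.range m).image f, ?_, fun j hj => H.exists_forall_lt_of_caps ?_ hj⟩
  · rw [Finset.card_image_of_injOn (Finset.coe_range m ▸ hf.strictMonoOn.injOn), Finset.card_range]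
  · simp only [Finset.forall_mem_image, Finset.mem_range]
    intro a ha b hb c hc hab hbc
    exact hf.lt_of_between hT ((hf.strictMonoOn.lt_iff_lt ha hb).mp hab)
      ((hf.strictMonoOn.lt_iff_lt hb hc).mp hbc) hc

theorem exists_finset_of_choose_lt_card (H : CrossingSystem h u s t) [Fintype ι] {a b : ℕ}
    (hcard : (a + b).choose a < Fintype.card ι) :
    ∃ R : Finset ι, (R.card = a + 2 ∨ R.card = b + 2) ∧
      ∀ j ∈ R, ∃ x, ∀ i ∈ R, i ≠ j → h i x < h j x := by
  rcases IsTriplePath.exists_or_exists_of_choose_lt_card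
    (P := fun i j k => t j k < t i j) (Q := fun i j k => -s j k < -s i j)
    (fun i j k hij hjk => by simpa using H.upper_lt_or_lower_lt hij hjk) a b Finset.univ hcard
    with ⟨f, hf⟩ | ⟨f, hf⟩
  · obtain ⟨R, hR, hdom⟩ := H.exists_finset_of_path hf
    exact ⟨R, .inl hR, hdom⟩
  · obtain ⟨R, hR, hdom⟩ := H.comp_neg.exists_finset_of_path hf
    refine ⟨R, .inr hR, fun j hj => ?_⟩
    obtain ⟨x, hx⟩ := hdom j hj
    exact ⟨-x, hx⟩

end CrossingSystem

end Crossings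

section SupportFunctions

open Real

variable {E : Type*} [NormedAddCommGroup E] [NormedSpace ℝ E] {e : E ≃L[ℝ] ℂ}
  {K L M : ConvexBody E} {a b p q : E} {u v x y : ℝ}

/-- The linear form `z ↦ ⟪(cos θ, sin θ), e z⟫` on a plane `E` with coordinates `e`. -/
def dirForm (e : E ≃L[ℝ] ℂ) (θ : ℝ) : StrongDual ℝ E :=
  (cos θ • Complex.reCLM + sin θ • Complex.imCLM) ∘L (e : E →L[ℝ] ℂ)

theorem dirForm_apply (e : E ≃L[ℝ] ℂ) (θ : ℝ) (z : E) :
    dirForm e θ z = cos θ * (e z).re + sin θ * (e z).im := by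
  simp [dirForm]

theorem periodic_dirForm (e : E ≃L[ℝ] ℂ) : (dirForm e).Periodic (2 * π) := fun θ => by
  simp only [dirForm, cos_add_two_pi, sin_add_two_pi]

theorem dirForm_add_pi (e : E ≃L[ℝ] ℂ) (θ : ℝ) (z : E) :
    dirForm e (θ + π) z = -dirForm e θ z := by
  simp only [dirForm_apply, cos_add_pi, sin_add_pi]
  ring

theorem sin_sub_mul_dirForm (e : E ≃L[ℝ] ℂ) (u x y : ℝ) (z : E) :
    sin (y - u) * dirForm e x z = sin (y - x) * dirForm e u z + sin (x - u) * dirForm e y z := by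
  simp only [dirForm_apply, sin_sub]
  ring

theorem dirForm_lt_of_le (hux : u < x) (hxy : x < y) (hy : y < u + π)
    (hu : dirForm e u a < dirForm e u b) (hx : dirForm e x b ≤ dirForm e x a) :
    dirForm e y b < dirForm e y a := by
  rw [← sub_pos, ← map_sub] at hu
  rw [← sub_nonpos, ← map_sub] at hx
  rw [← sub_neg, ← map_sub]
  refine neg_of_mul_neg_right (a := sin (x - u)) ?_
    (sin_nonneg_of_nonneg_of_le_pi (by linarith) (by linarith))
  have hyx : 0 < sin (y - x) := sin_pos_of_pos_of_lt_pi (by linarith) (by linarith)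
  have hyu : 0 < sin (y - u) := sin_pos_of_pos_of_lt_pi (by linarith) (by linarith)
  linarith [sin_sub_mul_dirForm e u x y (b - a), mul_pos hyx hu,
    mul_nonpos_of_nonneg_of_nonpos hyu.le hx]

theorem dirForm_lt_of_mem_Ioo (hx : x ∈ Ioo u v) (huv : v < u + π)
    (hu : dirForm e u a < dirForm e u b) (hv : dirForm e v a < dirForm e v b) :
    dirForm e x a < dirForm e x b :=
  not_le.mp fun hle => hv.asymm (dirForm_lt_of_le hx.1 hx.2 huv hu hle)

theorem dirForm_lt_max (hpq : (e p).im = (e q).im) (huv : v < u + π) (hcos : 0 ≤ cos u * cos v)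
    (hx : x ∈ Ioo u v) (hp : dirForm e u a < dirForm e u p) (hq : dirForm e v a < dirForm e v q) :
    dirForm e x a < max (dirForm e x p) (dirForm e x q) := by
  have hor : dirForm e u p ≤ dirForm e u q ∨ dirForm e v q ≤ dirForm e v p := by
    by_contra! hcon
    simp only [dirForm_apply, hpq, add_lt_add_iff_right] at hcon
    nlinarith [mul_pos (sub_pos.mpr hcon.1) (sub_pos.mpr hcon.2),
      mul_nonneg hcos (sq_nonneg ((e p).re - (e q).re))]
  rcases hor with hle | hle
  · exact lt_max_of_lt_right (dirForm_lt_of_mem_Ioo hx huv (hp.trans_le hle) hq)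
  · exact lt_max_of_lt_left (dirForm_lt_of_mem_Ioo hx huv hp (hq.trans_le hle))

theorem exists_eq_mul_dirForm (e : E ≃L[ℝ] ℂ) (f : StrongDual ℝ E) :
    ∃ r θ, 0 ≤ r ∧ θ ∈ Ioc (-π) π ∧ ∀ z, f z = r * dirForm e θ z := by
  let w : ℂ := ⟨f (e.symm 1), f (e.symm Complex.I)⟩
  refine ⟨‖w‖, w.arg, norm_nonneg w, Complex.arg_mem_Ioc w, fun z => ?_⟩
  have hz : z = (e z).re • e.symm 1 + (e z).im • e.symm Complex.I := e.injective (by simp)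
  calc f z = w.re * (e z).re + w.im * (e z).im := by
        conv_lhs => rw [hz]
        simp [w, mul_comm]
    _ = ‖w‖ * dirForm e w.arg z := by
        rw [dirForm_apply, ← Complex.norm_mul_cos_arg w, ← Complex.norm_mul_sin_arg w]
        ring

/-- The support function of a convex body in a plane with coordinates `e`, as a function of the
angle. -/
def supportFn (e : E ≃L[ℝ] ℂ) (K : ConvexBody E) (θ : ℝ) : ℝ := sSup (dirForm e θ '' K)

theorem dirForm_le_supportFn (ha : a ∈ K) : dirForm e x a ≤ supportFn e K x :=
  le_csSup (K.isCompact.image (dirForm e x).continuous).bddAbove (mem_image_of_mem _ ha)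

theorem exists_dirForm_eq_supportFn (e : E ≃L[ℝ] ℂ) (K : ConvexBody E) (x : ℝ) :
    ∃ a ∈ K, dirForm e x a = supportFn e K x := by
  obtain ⟨a, ha, hsup⟩ := K.isCompact.exists_sSup_image_eq K.nonempty
    (dirForm e x).continuous.continuousOn
  exact ⟨a, ha, hsup.symm⟩

theorem periodic_supportFn (e : E ≃L[ℝ] ℂ) (K : ConvexBody E) :
    (supportFn e K).Periodic (2 * π) := fun θ => by
  rw [supportFn, supportFn, periodic_dirForm]

theorem continuous_supportFn (e : E ≃L[ℝ] ℂ) (K : ConvexBody E) : Continuous (supportFn e K) := by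
  refine K.isCompact.continuous_sSup ?_
  simp only [Function.HasUncurry.uncurry, id, dirForm_apply]
  fun_prop

theorem not_subset_convexHull_of_forall_dirForm_lt {T : Set E}
    (hT : ∀ z ∈ T, dirForm e x z < supportFn e K x) : ¬ (K : Set E) ⊆ convexHull ℝ T := by
  intro hK
  obtain ⟨a, ha, hsup⟩ := exists_dirForm_eq_supportFn e K x
  have hT' : convexHull ℝ T ⊆ {z | dirForm e x z < supportFn e K x} :=
    convexHull_min hT (convex_halfSpace_lt (dirForm e x).isLinear _)
  exact (hT' (hK ha)).ne hsup

/-- The lines with normal `(cos u, sin u)` separate `K` strictly from `L`, which is on the side the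
normal points to. -/
def Precedes (e : E ≃L[ℝ] ℂ) (u : ℝ) (K L : ConvexBody E) : Prop :=
  ∀ a ∈ K, ∀ b ∈ L, dirForm e u a < dirForm e u b

theorem exists_precedes (hKL : Disjoint (K : Set E) L) (hp : p ∈ K) (hq : q ∈ L)
    (him : (e p).im = (e q).im) (hre : (e p).re < (e q).re) :
    ∃ u ∈ Ioo (-(π / 2)) (π / 2), Precedes e u K L := by
  obtain ⟨f, c, d, hfK, hcd, hfL⟩ := geometric_hahn_banach_compact_closed K.convex K.isCompact
    L.convex L.isClosed hKL
  obtain ⟨r, u, hr, hu, hf⟩ := exists_eq_mul_dirForm e f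
  have hprec : Precedes e u K L := fun a ha b hb => by
    have hab : f a < f b := (hfK a ha).trans (hcd.trans (hfL b hb))
    rw [hf, hf] at hab
    exact lt_of_mul_lt_mul_left hab hr
  have hcos : 0 < cos u := by
    have hpq := hprec p hp q hq
    rw [dirForm_apply, dirForm_apply, him, add_lt_add_iff_right] at hpq
    exact not_le.mp fun hcos => hpq.not_ge (mul_le_mul_of_nonpos_left hre.le hcos)
  refine ⟨u, abs_lt.mp (not_le.mp fun hle => hcos.not_ge ?_), hprec⟩
  rw [← cos_abs]
  exact cos_nonpos_of_pi_div_two_le_of_le hle (by linarith [abs_le.mpr ⟨hu.1.le, hu.2⟩, pi_pos])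

namespace Precedes

theorem add_pi (H : Precedes e u K L) : Precedes e (u + π) L K := fun b hb a ha => by
  rw [dirForm_add_pi, dirForm_add_pi]
  exact neg_lt_neg (H a ha b hb)

theorem supportFn_lt (H : Precedes e u K L) : supportFn e K u < supportFn e L u := by
  obtain ⟨a, ha, hsup⟩ := exists_dirForm_eq_supportFn e K u
  obtain ⟨b, hb⟩ := L.nonempty
  exact hsup ▸ (H a ha b hb).trans_le (dirForm_le_supportFn hb)

theorem supportFn_lt_of_le (H : Precedes e u K L) (hux : u < x) (hxy : x < y) (hy : y < u + π)
    (hle : supportFn e L x ≤ supportFn e K x) : supportFn e L y < supportFn e K y := by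
  obtain ⟨a, ha, hax⟩ := exists_dirForm_eq_supportFn e K x
  obtain ⟨b, hb, hby⟩ := exists_dirForm_eq_supportFn e L y
  have hba : dirForm e x b ≤ dirForm e x a := (dirForm_le_supportFn hb).trans (hle.trans hax.ge)
  exact hby ▸ (dirForm_lt_of_le hux hxy hy (H a ha b hb) hba).trans_le (dirForm_le_supportFn ha)

theorem supportFn_lt_max (HL : Precedes e u K L) (HM : Precedes e v K M) (hp : p ∈ L) (hq : q ∈ M)
    (hpq : (e p).im = (e q).im) (huv : v < u + π) (hcos : 0 ≤ cos u * cos v) (hx : x ∈ Ioo u v) :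
    supportFn e K x < max (supportFn e L x) (supportFn e M x) := by
  obtain ⟨a, ha, hax⟩ := exists_dirForm_eq_supportFn e K x
  rw [← hax]
  exact (dirForm_lt_max hpq huv hcos hx (HL a ha p hp) (HM a ha q hq)).trans_le
    (max_le_max (dirForm_le_supportFn hp) (dirForm_le_supportFn hq))

theorem exists_supportFn_eq (H : Precedes e u K L) :
    ∃ t ∈ Ioo u (u + π), supportFn e K t = supportFn e L t ∧
      (∀ x ∈ Ico u t, supportFn e K x < supportFn e L x) ∧
      ∀ x ∈ Ioc t (u + π), supportFn e L x < supportFn e K x := by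
  have hcont : Continuous fun x => supportFn e K x - supportFn e L x :=
    (continuous_supportFn e K).sub (continuous_supportFn e L)
  obtain ⟨t, ht, heq⟩ := intermediate_value_Ioo (by linarith [pi_pos] : u ≤ u + π)
    hcont.continuousOn ⟨sub_neg.mpr H.supportFn_lt, sub_pos.mpr H.add_pi.supportFn_lt⟩
  replace heq := sub_eq_zero.mp heq
  refine ⟨t, ht, heq, fun x hx => ?_, fun x hx => ?_⟩
  · rcases eq_or_lt_of_le hx.1 with rfl | hux
    · exact H.supportFn_lt
    · exact not_le.mp fun hle => (H.supportFn_lt_of_le hux hx.2 ht.2 hle).ne heq.symm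
  · rcases eq_or_lt_of_le hx.2 with rfl | hxu
    · exact H.add_pi.supportFn_lt
    · exact H.supportFn_lt_of_le ht.1 hx.1 hxu heq.ge

theorem exists_isCrossing (H : Precedes e u K L) (hu : u ∈ Ioo (-(π / 2)) (π / 2)) :
    ∃ s t, IsCrossing (supportFn e K) (supportFn e L) u s t := by
  obtain ⟨t, ht, het, ht_lt, ht_gt⟩ := H.exists_supportFn_eq
  obtain ⟨r, hr, her, hr_lt, hr_gt⟩ := H.add_pi.exists_supportFn_eq
  refine ⟨r - 2 * π, t, hu, ⟨by linarith [hr.1], by linarith [hr.2]⟩, ht, ?_, het,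
    fun x hx => ?_, fun x hx => ?_⟩
  · rw [(periodic_supportFn e K).sub_eq, (periodic_supportFn e L).sub_eq, her]
  · rcases le_or_gt u x with hux | hxu
    · exact ht_lt x ⟨hux, hx.2⟩
    · rw [← periodic_supportFn e K, ← periodic_supportFn e L]
      exact hr_gt _ ⟨by linarith [hx.1], by linarith⟩
  · rcases le_or_gt x (u + π) with hxu | hux
    · exact ht_gt x ⟨hx.1, hxu⟩
    · exact hr_lt x ⟨hux.le, by linarith [hx.2]⟩

end Precedes

theorem isCompact_convexJoin {V : Type*} [AddCommGroup V] [Module ℝ V] [TopologicalSpace V]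
    [ContinuousAdd V] [ContinuousSMul ℝ V] {s t : Set V} (hs : IsCompact s) (ht : IsCompact t) :
    IsCompact (convexJoin ℝ s t) := by
  have himage : convexJoin ℝ s t =
      (fun w : (V × V) × ℝ => (1 - w.2) • w.1.1 + w.2 • w.1.2) '' ((s ×ˢ t) ×ˢ Icc 0 1) := by
    ext z
    simp only [mem_convexJoin, segment_eq_image, mem_image, Prod.exists, mem_prod]
    grind
  rw [himage]
  exact ((hs.prod ht).prod isCompact_Icc).image (by fun_prop)

theorem exists_supportFn_lt (e : E ≃L[ℝ] ℂ)
    (hK : ¬ (K : Set E) ⊆ convexHull ℝ ((L : Set E) ∪ M)) :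
    ∃ x, supportFn e L x < supportFn e K x ∧ supportFn e M x < supportFn e K x := by
  obtain ⟨z, hzK, hz⟩ := not_subset.mp hK
  have hclosed : IsClosed (convexHull ℝ ((L : Set E) ∪ M)) := by
    rw [L.convex.convexHull_union M.convex L.nonempty M.nonempty]
    exact (isCompact_convexJoin L.isCompact M.isCompact).isClosed
  obtain ⟨f, c, hf, hcz⟩ := geometric_hahn_banach_closed_point (convex_convexHull ℝ _) hclosed hz
  obtain ⟨r, x, hr, -, hfx⟩ := exists_eq_mul_dirForm e f
  have supportFn_lt (N : ConvexBody E) (hN : (N : Set E) ⊆ (L : Set E) ∪ M) :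
      supportFn e N x < supportFn e K x := by
    obtain ⟨a, ha, hax⟩ := exists_dirForm_eq_supportFn e N x
    have haz := (hf a (subset_convexHull ℝ _ (hN ha))).trans hcz
    rw [hfx, hfx] at haz
    exact hax ▸ (lt_of_mul_lt_mul_left haz hr).trans_le (dirForm_le_supportFn hzK)
  exact ⟨x, supportFn_lt L subset_union_left, supportFn_lt M subset_union_right⟩

section Family

variable {ι : Type*} {K : ι → ConvexBody E} {p : ι → E}

theorem exists_crossingSystem [LinearOrder ι] (hp : ∀ i, p i ∈ K i)
    (him : ∀ i j, (e (p i)).im = (e (p j)).im) (hre : StrictMono fun i => (e (p i)).re)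
    (hdisj : Pairwise fun i j => Disjoint (K i : Set E) (K j))
    (hgen : ∀ i j k, i ≠ j → i ≠ k → j ≠ k →
      ¬ (K i : Set E) ⊆ convexHull ℝ ((K j : Set E) ∪ K k)) :
    ∃ u s t, CrossingSystem (fun i => supportFn e (K i)) u s t := by
  have hex (i j : ι) (hij : i < j) : ∃ u s t, Precedes e u (K i) (K j) ∧
      IsCrossing (supportFn e (K i)) (supportFn e (K j)) u s t := by
    obtain ⟨u, hu, hprec⟩ :=
      exists_precedes (hdisj hij.ne) (hp i) (hp j) (him i j) (hre hij)
    obtain ⟨s, t, hcross⟩ := hprec.exists_isCrossing hu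
    exact ⟨u, s, t, hprec, hcross⟩
  choose! u s t hprec hcross using hex
  have hpi {i j k l : ι} (hij : i < j) (hkl : k < l) : u k l < u i j + π := by
    linarith [(hcross i j hij).angle_mem.1, (hcross k l hkl).angle_mem.2]
  have hcos {i j k l : ι} (hij : i < j) (hkl : k < l) : 0 ≤ cos (u i j) * cos (u k l) :=
    (mul_pos (cos_pos_of_mem_Ioo (hcross i j hij).angle_mem)
      (cos_pos_of_mem_Ioo (hcross k l hkl).angle_mem)).le
  refine ⟨u, s, t, fun i => periodic_supportFn e (K i), hcross,
    fun i j k hij hik x hx => ?_, fun i j k hik hjk x hx => ?_,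
    fun i j k hij hik hjk => exists_supportFn_lt e (hgen i j k hij hik hjk)⟩
  · exact (hprec i j hij).supportFn_lt_max (hprec i k hik) (hp j) (hp k)
      (him j k) (hpi hij hik) (hcos hij hik) hx
  · exact (hprec i k hik).add_pi.supportFn_lt_max (hprec j k hjk).add_pi (hp i) (hp j)
      (him i j) (by linarith [hpi hik hjk])
      (by simpa only [cos_add_pi, neg_mul_neg] using hcos hik hjk)
      ⟨by linarith [hx.1], by linarith [hx.2]⟩

theorem exists_finset_not_subset_convexHull [Fintype ι] (hp : ∀ i, p i ∈ K i)
    (him : ∀ i j, (e (p i)).im = (e (p j)).im)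
    (hdisj : Pairwise fun i j => Disjoint (K i : Set E) (K j))
    (hgen : ∀ i j k, i ≠ j → i ≠ k → j ≠ k →
      ¬ (K i : Set E) ⊆ convexHull ℝ ((K j : Set E) ∪ K k))
    {a b : ℕ} (hcard : (a + b).choose a < Fintype.card ι) :
    ∃ R : Finset ι, (R.card = a + 2 ∨ R.card = b + 2) ∧
      ∀ j ∈ R, ¬ (K j : Set E) ⊆ convexHull ℝ (⋃ i ∈ R, ⋃ _ : i ≠ j, K i) := by
  have hinj : Function.Injective fun i => (e (p i)).re := fun i j hij => by
    by_contra hne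
    have hpij : p i = p j := e.injective (Complex.ext hij (him i j))
    exact (hdisj hne).notMem_of_mem_left (hp i) (hpij ▸ hp j)
  let _ : LinearOrder ι := LinearOrder.lift' _ hinj
  obtain ⟨u, s, t, H⟩ := exists_crossingSystem hp him (fun _ _ hij => hij) hdisj hgen
  obtain ⟨R, hR, hdom⟩ := H.exists_finset_of_choose_lt_card hcard
  refine ⟨R, hR, fun j hj => ?_⟩
  obtain ⟨x, hx⟩ := hdom j hj
  refine not_subset_convexHull_of_forall_dirForm_lt (e := e) (x := x) ?_
  simp only [mem_iUnion]
  rintro z ⟨i, hi, hij, hz⟩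
  exact (dirForm_le_supportFn hz).trans_lt (hx i hi hij)

end Family

end SupportFunctions

theorem convexPos_iff {F : Set (Set Plane)} :
    ConvexPos F ↔ ∀ A ∈ F, ¬ A ⊆ convexHull ℝ (⋃₀ (F \ {A})) := by
  refine forall₂_congr fun A hA => not_congr ⟨fun heq => ?_, fun hsub => ?_⟩
  · exact heq ▸ (subset_sUnion_of_mem hA).trans (subset_convexHull ℝ _)
  · refine (convexHull_min (sUnion_subset fun B hB => ?_) (convex_convexHull ℝ _)).antisymm
      (convexHull_mono (sUnion_mono sdiff_subset))
    rcases eq_or_ne B A with rfl | hne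
    · exact hsub
    · exact (subset_sUnion_of_mem (mem_sdiff_singleton.mpr ⟨hB, hne⟩)).trans (subset_convexHull ℝ _)

theorem GenPos.not_subset_convexHull {F : Set (Set Plane)} (hF : GenPos F) {A B C : Set Plane}
    (hA : A ∈ F) (hB : B ∈ F) (hC : C ∈ F) (hAB : A ≠ B) (hAC : A ≠ C) (hBC : B ≠ C) :
    ¬ A ⊆ convexHull ℝ (B ∪ C) := by
  have htriple : ConvexPos {A, B, C} :=
    hF _ (by simp [insert_subset_iff, *]) (ncard_eq_three.mpr ⟨A, B, C, hAB, hAC, hBC, rfl⟩)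
  have hA := convexPos_iff.mp htriple A (mem_insert A _)
  rwa [insert_sdiff_self_of_notMem (by simp [hAB, hAC]), sUnion_pair] at hA

theorem IsLine.exists_equiv_complex_im_eq {ℓ : AffineSubspace ℝ Plane} (hℓ : IsLine ℓ) :
    ∃ e : Plane ≃L[ℝ] ℂ, ∀ x ∈ ℓ, ∀ y ∈ ℓ, (e x).im = (e y).im := by
  obtain ⟨d, hd, hspan⟩ := finrank_eq_one_iff'.mp hℓ
  let f : Plane ≃L[ℝ] ℂ := Complex.orthonormalBasisOneI.repr.symm.toContinuousLinearEquiv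
  have hfd : f d ≠ 0 := by simpa using hd
  -- Division by `f d` turns the direction of the line into the real axis.
  refine ⟨f.trans (ContinuousLinearEquiv.smulLeft (Units.mk0 (f d)⁻¹ (inv_ne_zero hfd))),
    fun x hx y hy => ?_⟩
  obtain ⟨r, hr⟩ := hspan ⟨x -ᵥ y, AffineSubspace.vsub_mem_direction hx hy⟩
  have hxy : x - y = r • (d : Plane) := (congr_arg Subtype.val hr).symm
  rw [← sub_eq_zero, ← Complex.sub_im, ← map_sub, hxy]
  change ((f d)⁻¹ * f (r • (d : Plane))).im = 0
  rw [map_smul, mul_smul_comm, inv_mul_cancel₀ hfd]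
  simp

/-- Pach–Tóth: disjoint convex bodies with a common transversal line contain `n`
members in convex position. -/
theorem convex_position_of_transversal_line :
    ∀ n : ℕ, 3 ≤ n → ∀ F : Set (Set Plane), F.Finite →
      F.ncard = Nat.choose (2 * n - 4) (n - 2) + 1 →
      (∀ A ∈ F, ConvexBody2 A) → F.Pairwise Disjoint → GenPos F →
      (∃ L : AffineSubspace ℝ Plane, TransversalLine L F) →
      ∃ G ⊆ F, G.ncard = n ∧ ConvexPos G := by
  intro n hn F hfin hcard hbody hdisj hgen ⟨ℓ, hℓ, hmeet⟩
  obtain ⟨e, he⟩ := hℓ.exists_equiv_complex_im_eq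
  let _ : Fintype F := hfin.fintype
  let K (A : F) : ConvexBody Plane :=
    ⟨A, (hbody A A.2).2.2, (hbody A A.2).2.1, (hbody A A.2).1⟩
  choose p hpℓ hpK using fun A : F => hmeet A A.2
  have hcard' : (n - 2 + (n - 2)).choose (n - 2) < Fintype.card F := by
    rw [← Nat.card_eq_fintype_card, Nat.card_coe_set_eq, hcard,
      show n - 2 + (n - 2) = 2 * n - 4 by lia]
    exact Nat.lt_succ_self _
  obtain ⟨R, hR, hconv⟩ := exists_finset_not_subset_convexHull (K := K) hpK
    (fun A B => he _ (hpℓ A) _ (hpℓ B))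
    (fun A B hAB => hdisj A.2 B.2 (Subtype.coe_ne_coe.mpr hAB))
    (fun A B C hAB hAC hBC => hgen.not_subset_convexHull A.2 B.2 C.2
      (Subtype.coe_ne_coe.mpr hAB) (Subtype.coe_ne_coe.mpr hAC) (Subtype.coe_ne_coe.mpr hBC)) hcard'
  refine ⟨(↑) '' (R : Set F), Subtype.coe_image_subset F _, ?_, convexPos_iff.mpr ?_⟩
  · rw [ncard_image_of_injective _ Subtype.val_injective, ncard_coe_finset]
    exact (or_self_iff.mp hR).trans (Nat.sub_add_cancel (by lia))
  · rintro _ ⟨A, hA, rfl⟩ hsub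
    refine hconv A hA (hsub.trans (convexHull_mono ?_))
    rintro z ⟨_, ⟨⟨B, hB, rfl⟩, hBA⟩, hz⟩
    exact mem_iUnion₂.mpr ⟨B, hB, mem_iUnion.mpr ⟨ne_of_apply_ne _ hBA, hz⟩⟩
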